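/- arXiv:1304.3536 — 2 statements merged into one kernel-verified Lean document; each statement's English description precedes it below -/
import Mathlib

section
/- Let ρ ∈ (0,1], δ ∈ (0,1], and let φ : (0,∞) → ℝ be bounded and uniformly ρ-Hölder continuous. Then for every x > 0, lim_{N→∞} (1/Γ(N+δ)) ∫_0^∞ φ(1/s) (N s x)^{N+δ} e^{−N s x} ds/s = φ(x), where Γ is the Gamma function, the limit being over integers N ≥ 1 and the power (Nsx)^{N+δ} being the real power of the positive number Nsx. -/
open MeasureTheory Set Filter

lemma aux_int (a c : ℝ) (ha : 0 < a) (hc : 0 < c) :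
    IntegrableOn (fun s : ℝ => s ^ (a - 1) * Real.exp (-(c * s))) (Ioi 0) := by
  by_contra h
  have h1 := integral_undef h
  rw [Real.integral_rpow_mul_exp_neg_mul_Ioi ha hc] at h1
  have := Real.Gamma_pos_of_pos ha
  have : 0 < (1 / c) ^ a * Real.Gamma a := by positivity
  linarith

lemma aux_moment (a c x : ℝ) (ha : 0 < a) (hc : 0 < c) :
    IntegrableOn (fun s : ℝ => (s * x - 1) ^ 2 * (s ^ (a - 1) * Real.exp (-(c * s)))) (Ioi 0) ∧
    ∫ s in Ioi (0 : ℝ), (s * x - 1) ^ 2 * (s ^ (a - 1) * Real.exp (-(c * s))) =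
      (1 / c) ^ a * Real.Gamma a * (a * (a + 1) * x ^ 2 / c ^ 2 - 2 * a * x / c + 1) := by
  have i0 := aux_int a c ha hc
  have i1 := aux_int (a + 1) c (by linarith) hc
  have i2 := aux_int (a + 1 + 1) c (by linarith) hc
  have e : EqOn (fun s : ℝ => x ^ 2 * (s ^ (a + 1 + 1 - 1) * Real.exp (-(c * s)))
      + (-2 * x) * (s ^ (a + 1 - 1) * Real.exp (-(c * s)))
      + s ^ (a - 1) * Real.exp (-(c * s)))
      (fun s : ℝ => (s * x - 1) ^ 2 * (s ^ (a - 1) * Real.exp (-(c * s)))) (Ioi 0) := by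
    intro s hs
    have hs : 0 < s := hs
    have e1 : s ^ (a + 1 - 1) = s ^ (a - 1) * s := by
      rw [← Real.rpow_add_one hs.ne']; congr 1; ring
    have e2 : s ^ (a + 1 + 1 - 1) = s ^ (a - 1) * s * s := by
      rw [← e1, ← Real.rpow_add_one hs.ne']; congr 1; ring
    simp only [e1, e2]
    ring
  have j2 := i2.const_mul (x ^ 2)
  have j1 := i1.const_mul (-2 * x)
  have j12 : IntegrableOn (fun s : ℝ => x ^ 2 * (s ^ (a + 1 + 1 - 1) * Real.exp (-(c * s)))
      + (-2 * x) * (s ^ (a + 1 - 1) * Real.exp (-(c * s)))) (Ioi 0) := j2.add j1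
  refine ⟨IntegrableOn.congr_fun (j12.add i0) e measurableSet_Ioi, ?_⟩
  rw [← setIntegral_congr_fun measurableSet_Ioi e,
    integral_add j12 i0, integral_add j2 j1, integral_const_mul, integral_const_mul,
    Real.integral_rpow_mul_exp_neg_mul_Ioi ha hc,
    Real.integral_rpow_mul_exp_neg_mul_Ioi (by linarith) hc,
    Real.integral_rpow_mul_exp_neg_mul_Ioi (by linarith) hc,
    Real.Gamma_add_one (by linarith : a + 1 ≠ 0), Real.Gamma_add_one ha.ne',
    Real.rpow_add_one (by positivity), Real.rpow_add_one (by positivity)]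
  field_simp
  ring

/-- Let `ρ ∈ (0,1]`, `δ ∈ (0,1]`, and `φ : (0,∞) → ℝ` bounded and uniformly `ρ`-Hölder.
Then for every `x > 0`,
`(1/Γ(N+δ)) ∫_0^∞ φ(1/s) (Nsx)^{N+δ} e^{−Nsx} ds/s → φ(x)` as the integer `N → ∞`. -/
theorem stmt_13 (ρ δ : ℝ) (hρ : ρ ∈ Set.Ioc (0 : ℝ) 1) (hδ : δ ∈ Set.Ioc (0 : ℝ) 1)
    (φ : ℝ → ℝ) (M L : ℝ)
    (hbdd : ∀ x ∈ Set.Ioi (0 : ℝ), |φ x| ≤ M)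
    (hHol : ∀ x ∈ Set.Ioi (0 : ℝ), ∀ y ∈ Set.Ioi (0 : ℝ), |φ x - φ y| ≤ L * |x - y| ^ ρ)
    (x : ℝ) (hx : 0 < x) :
    Tendsto (fun N : ℕ =>
      (1 / Real.Gamma ((N : ℝ) + δ)) *
        ∫ s in Ioi (0 : ℝ),
          φ (1 / s) * ((N : ℝ) * s * x) ^ ((N : ℝ) + δ) *
            Real.exp (-((N : ℝ) * s * x)) / s)
      atTop (nhds (φ x)) := by
  have hδ0 : 0 < δ := hδ.1
  -- continuity
  have hcont : ContinuousOn φ (Ioi 0) := by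
    intro y hy
    have h0 : Tendsto (fun z => L * |z - y| ^ ρ) (nhdsWithin y (Ioi 0)) (nhds 0) := by
      have : Continuous (fun z : ℝ => L * |z - y| ^ ρ) :=
        continuous_const.mul ((continuous_id.sub continuous_const).abs.rpow_const
          (fun _ => Or.inr hρ.1.le))
      have h := (this.tendsto y).mono_left (nhdsWithin_le_nhds (s := Ioi 0))
      simpa [Real.zero_rpow hρ.1.ne'] using h
    rw [ContinuousWithinAt, tendsto_iff_dist_tendsto_zero]
    refine squeeze_zero' (Eventually.of_forall fun _ => dist_nonneg) ?_ h0
    filter_upwards [self_mem_nhdsWithin] with z hz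
    rw [Real.dist_eq]
    exact hHol z hz y hy
  have hψ : ContinuousOn (fun s => φ (1 / s)) (Ioi 0) := by
    refine hcont.comp (continuousOn_const.div continuousOn_id fun s hs => (ne_of_gt hs)) ?_
    intro s hs
    have hs : 0 < s := hs
    exact (one_div_pos.mpr hs : (0 : ℝ) < 1 / s)
  have hM : 0 ≤ M := (abs_nonneg _).trans (hbdd x hx)
  have key : ∀ ε > 0, ∃ C ≥ 0, ∀ s > 0, |φ (1 / s) - φ x| ≤ ε + C * (s * x - 1) ^ 2 := by
    intro ε hε
    have hc : ContinuousAt (fun s => φ (1 / s)) (1 / x) :=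
      hψ.continuousAt (Ioi_mem_nhds (one_div_pos.mpr hx))
    obtain ⟨η, hη, h⟩ := Metric.continuousAt_iff.1 hc ε hε
    refine ⟨2 * M / (η * x) ^ 2, by positivity, fun s hs => ?_⟩
    by_cases hd : dist s (1 / x) < η
    · have := h hd
      rw [Real.dist_eq, one_div_one_div] at this
      have : 0 ≤ 2 * M / (η * x) ^ 2 * (s * x - 1) ^ 2 := by positivity
      linarith
    · rw [not_lt, Real.dist_eq] at hd
      have h1 : |φ (1 / s) - φ x| ≤ 2 * M := by
        have := abs_sub (φ (1 / s)) (φ x)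
        have := hbdd _ (one_div_pos.mpr hs : (0:ℝ) < 1 / s)
        have := hbdd x hx
        linarith
      have h2 : η * x ≤ |s * x - 1| := by
        have : s * x - 1 = (s - 1 / x) * x := by field_simp
        rw [this, abs_mul, abs_of_pos hx]
        gcongr
      have h3 : (η * x) ^ 2 ≤ (s * x - 1) ^ 2 := by
        rw [← sq_abs (s * x - 1)]; gcongr
      have h4 : 2 * M ≤ 2 * M / (η * x) ^ 2 * (s * x - 1) ^ 2 := by
        rw [div_mul_eq_mul_div, le_div_iff₀ (by positivity)]
        gcongr
      linarith
  -- main estimate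
  have main : ∀ ε > 0, ∀ C ≥ 0, (∀ s > 0, |φ (1 / s) - φ x| ≤ ε + C * (s * x - 1) ^ 2) →
      ∀ N : ℕ, 0 < N → |(1 / Real.Gamma ((N : ℝ) + δ)) *
        (∫ s in Ioi (0 : ℝ), φ (1 / s) * ((N : ℝ) * s * x) ^ ((N : ℝ) + δ) *
            Real.exp (-((N : ℝ) * s * x)) / s) - φ x| ≤
        ε + C * ((δ ^ 2 + δ) * (1 / (N : ℝ)) ^ 2 + 1 / (N : ℝ)) := by
    intro ε hε C hC hb N hN
    have hN' : (0 : ℝ) < N := by exact_mod_cast hN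
    set a : ℝ := (N : ℝ) + δ with ha
    have ha0 : 0 < a := by positivity
    have hc : 0 < (N : ℝ) * x := by positivity
    set c : ℝ := (N : ℝ) * x with hcdef
    have hΓ := Real.Gamma_pos_of_pos ha0
    set k : ℝ → ℝ := fun s => s ^ (a - 1) * Real.exp (-(c * s)) with hk
    have ik : IntegrableOn k (Ioi 0) := aux_int a c ha0 hc
    have Ik : ∫ s in Ioi (0 : ℝ), k s = (1 / c) ^ a * Real.Gamma a :=
      Real.integral_rpow_mul_exp_neg_mul_Ioi ha0 hc
    obtain ⟨im, Im⟩ := aux_moment a c x ha0 hc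
    have iφ : IntegrableOn (fun s => φ (1 / s) * k s) (Ioi 0) := by
      refine Integrable.bdd_mul (c := M) ik (hψ.aestronglyMeasurable measurableSet_Ioi) ?_
      filter_upwards [ae_restrict_mem measurableSet_Ioi] with s hs
      exact hbdd _ (one_div_pos.mpr hs : (0:ℝ) < 1 / s)
    have hca : c ^ a * (1 / c) ^ a = 1 := by
      rw [← Real.mul_rpow hc.le (by positivity), mul_one_div_cancel hc.ne', Real.one_rpow]
    have e1 : ∫ s in Ioi (0 : ℝ), φ (1 / s) * ((N : ℝ) * s * x) ^ a *
            Real.exp (-((N : ℝ) * s * x)) / s = c ^ a * ∫ s in Ioi (0 : ℝ), φ (1 / s) * k s := by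
      rw [← integral_const_mul]
      refine setIntegral_congr_fun measurableSet_Ioi fun s hs => ?_
      have hs : 0 < s := hs
      have : (N : ℝ) * s * x = c * s := by rw [hcdef]; ring
      simp only [hk, this]
      rw [Real.mul_rpow hc.le hs.le, Real.rpow_sub_one hs.ne']
      ring
    have e2 : φ x = 1 / Real.Gamma a * (c ^ a * ∫ s in Ioi (0 : ℝ), φ x * k s) := by
      rw [integral_const_mul, Ik]
      calc φ x = φ x * (c ^ a * (1 / c) ^ a) := by rw [hca, mul_one]
        _ = _ := by field_simp
    have e3 : (1 / Real.Gamma a) * (c ^ a * ∫ s in Ioi (0 : ℝ), φ (1 / s) * k s) - φ x =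
        1 / Real.Gamma a * (c ^ a * ∫ s in Ioi (0 : ℝ), (φ (1 / s) - φ x) * k s) := by
      conv_lhs => rw [e2]
      rw [← mul_sub, ← mul_sub, ← integral_sub iφ (ik.const_mul _)]
      simp only [sub_mul]
    rw [e1, e3]
    have e4 : |∫ s in Ioi (0 : ℝ), (φ (1 / s) - φ x) * k s| ≤
        ∫ s in Ioi (0 : ℝ), (ε * k s + C * ((s * x - 1) ^ 2 * k s)) := by
      rw [← Real.norm_eq_abs]
      refine norm_integral_le_of_norm_le ((ik.const_mul ε).add (im.const_mul C)) ?_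
      filter_upwards [ae_restrict_mem measurableSet_Ioi] with s hs
      have hs : 0 < s := hs
      have hks : 0 ≤ k s := by simp only [hk]; positivity
      rw [norm_mul, Real.norm_eq_abs, Real.norm_of_nonneg hks]
      calc _ ≤ (ε + C * (s * x - 1) ^ 2) * k s := by gcongr; exact hb s hs
        _ = _ := by ring
    rw [integral_add (ik.const_mul ε) (im.const_mul C), integral_const_mul, integral_const_mul,
      Ik, Im] at e4
    rw [abs_mul, abs_mul, abs_of_pos (by positivity : 0 < 1 / Real.Gamma a),
      abs_of_pos (by positivity : 0 < c ^ a)]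
    calc _ ≤ 1 / Real.Gamma a * (c ^ a * (ε * ((1 / c) ^ a * Real.Gamma a) +
          C * ((1 / c) ^ a * Real.Gamma a *
            (a * (a + 1) * x ^ 2 / c ^ 2 - 2 * a * x / c + 1)))) := by gcongr
      _ = (c ^ a * (1 / c) ^ a) * (ε + C * (a * (a + 1) * x ^ 2 / c ^ 2 - 2 * a * x / c + 1)) := by
        field_simp
      _ = _ := by
        rw [hca, one_mul, ha, hcdef]
        field_simp
        ring
  rw [Metric.tendsto_atTop']
  intro ε hε
  obtain ⟨C, hC, hb⟩ := key (ε / 2) (by positivity)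
  have hlim : Tendsto (fun N : ℕ => ε / 2 + C * ((δ ^ 2 + δ) * (1 / (N : ℝ)) ^ 2 + 1 / (N : ℝ)))
      atTop (nhds (ε / 2 + C * ((δ ^ 2 + δ) * 0 ^ 2 + 0))) := by
    have h := tendsto_one_div_atTop_nhds_zero_nat (𝕜 := ℝ)
    exact (((h.pow 2).const_mul _).add h).const_mul C |>.const_add _
  have := (hlim.eventually_lt_const (u := ε) (by simp; linarith))
  obtain ⟨n, hn⟩ := eventually_atTop.1 this
  refine ⟨n, fun N hN => ?_⟩
  rw [Real.dist_eq]
  exact (main _ (by positivity) C hC hb N (by omega)).trans_lt (hn N hN.le)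
end

section
/- Let k ≥ 1 be an integer, x > 0, and let φ : ℝ → ℝ be a C^∞ function with compact support contained in (0,∞). For an integer N ≥ 1 define K_N : (0,∞) → ℝ by K_N(λ) := (1/N!) · λ^{−1} · (N x / λ)^{N+1} · e^{−N x / λ}. Then lim_{N→∞} ∫_0^∞ φ(λ) · (d^k/dλ^k) K_N(λ) dλ = (−1)^k φ^{(k)}(x). -/
open MeasureTheory Set Filter

lemma ibp_integrable (u g : ℝ → ℝ) (hu : Continuous u) (huc : HasCompactSupport u)
    (hus : tsupport u ⊆ Set.Ioi 0) (hg : ContinuousOn g (Ioi 0)) :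
    Integrable (fun t => u t * g t) := by
  have h1 : IntegrableOn (fun t => u t * g t) (tsupport u) :=
    (hu.continuousOn.mul (hg.mono hus)).integrableOn_compact huc
  refine (integrableOn_iff_integrable_of_support_subset ?_).1 h1
  intro t ht
  apply subset_tsupport
  simp only [Function.mem_support] at ht ⊢
  exact left_ne_zero_of_mul ht

lemma iter_contDiffOn (f : ℝ → ℝ) (hf : ContDiffOn ℝ (⊤ : ℕ∞) f (Ioi 0)) (k : ℕ) :
    ContDiffOn ℝ (⊤ : ℕ∞) (iteratedDeriv k f) (Ioi 0) := by
  induction k with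
  | zero => simpa using hf
  | succ n ih =>
    rw [iteratedDeriv_succ]
    exact ((contDiffOn_infty_iff_deriv_of_isOpen isOpen_Ioi).1 ih).2

lemma ibp_step (f : ℝ → ℝ) (hf : ContDiffOn ℝ (⊤ : ℕ∞) f (Ioi 0))
    (φ : ℝ → ℝ) (hφ : ContDiff ℝ (⊤ : ℕ∞) φ) (hφc : HasCompactSupport φ)
    (hφs : tsupport φ ⊆ Set.Ioi 0) :
    ∫ t in Ioi (0:ℝ), φ t * deriv f t = - ∫ t in Ioi (0:ℝ), deriv φ t * f t := by
  have hd := (contDiffOn_infty_iff_deriv_of_isOpen isOpen_Ioi).1 hf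
  have hφ' : ContDiff ℝ (⊤ : ℕ∞) (deriv φ) := (contDiff_infty_iff_deriv.1 hφ).2
  have key := integral_Ioi_mul_deriv_eq_deriv_mul (a := (0:ℝ)) (a' := (0:ℝ)) (b' := (0:ℝ))
    (u := φ) (v := f) (u' := deriv φ) (v' := deriv f)
    (fun t _ => ((contDiff_infty_iff_deriv.1 hφ).1 t).hasDerivAt)
    (fun t ht => ((hd.1 t ht).differentiableAt (isOpen_Ioi.mem_nhds ht)).hasDerivAt)
    (ibp_integrable φ (deriv f) hφ.continuous hφc hφs hd.2.continuousOn).integrableOn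
    (ibp_integrable (deriv φ) f hφ'.continuous hφc.deriv
      ((tsupport_deriv_subset (f := φ)).trans hφs) hf.continuousOn).integrableOn
    ?_ ?_
  · rw [key]; simp
  · have h0 : (0:ℝ) ∉ tsupport φ := fun h => lt_irrefl (0:ℝ) (hφs h)
    have := notMem_tsupport_iff_eventuallyEq.1 h0
    refine Tendsto.congr' ?_ tendsto_const_nhds
    filter_upwards [nhdsWithin_le_nhds this] with t ht
    simp [ht]
  · refine Tendsto.congr' ?_ tendsto_const_nhds
    have := hφc.isCompact.isBounded.bddAbove
    obtain ⟨B, hB⟩ := this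
    filter_upwards [eventually_gt_atTop B] with t ht
    have : t ∉ tsupport φ := fun h => absurd (hB h) (not_le.2 ht)
    simp [image_eq_zero_of_notMem_tsupport this]

lemma ibp_iter (f : ℝ → ℝ) (hf : ContDiffOn ℝ (⊤ : ℕ∞) f (Ioi 0)) (k : ℕ) :
    ∀ (φ : ℝ → ℝ) (_ : ContDiff ℝ (⊤ : ℕ∞) φ) (_ : HasCompactSupport φ)
    (_ : tsupport φ ⊆ Set.Ioi 0),
    ∫ t in Ioi (0:ℝ), φ t * iteratedDeriv k f t
      = (-1)^k * ∫ t in Ioi (0:ℝ), iteratedDeriv k φ t * f t := by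
  induction k with
  | zero => intro φ _ _ _; simp
  | succ n ih =>
    intro φ hφ hφc hφs
    rw [iteratedDeriv_succ (f := f), ibp_step _ (iter_contDiffOn f hf n) φ hφ hφc hφs,
      ih (deriv φ) (contDiff_infty_iff_deriv.1 hφ).2 hφc.deriv
      ((tsupport_deriv_subset (f := φ)).trans hφs), iteratedDeriv_succ', pow_succ]
    ring

lemma iter_compact (k : ℕ) : ∀ (φ : ℝ → ℝ) (_ : ContDiff ℝ (⊤ : ℕ∞) φ) (_ : HasCompactSupport φ),
    ContDiff ℝ (⊤ : ℕ∞) (iteratedDeriv k φ) ∧ HasCompactSupport (iteratedDeriv k φ) := by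
  induction k with
  | zero => intro φ h1 h2; simpa using ⟨h1, h2⟩
  | succ n ih =>
    intro φ h1 h2
    rw [iteratedDeriv_succ']
    exact ih _ (contDiff_infty_iff_deriv.1 h1).2 h2.deriv

lemma moment (c : ℝ) (hc : 0 < c) (m : ℕ) :
    ∫ t in Ioi (0:ℝ), (t⁻¹)^(m+2) * Real.exp (-(c / t)) = (m.factorial : ℝ) / c^(m+1) := by
  have h1 := integral_comp_rpow_Ioi (fun u : ℝ => u^m * Real.exp (-(c * u))) (p := -1) (by norm_num)
  have h2 := Real.integral_rpow_mul_exp_neg_mul_Ioi (a := (m:ℝ)+1) (r := c) (by positivity) hc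
  have h3 : ∫ t in Ioi (0:ℝ), t^m * Real.exp (-(c * t)) = (m.factorial : ℝ) / c^(m+1) := by
    rw [Real.Gamma_nat_eq_factorial] at h2
    have e : ((m:ℝ)+1) = ((m+1 : ℕ) : ℝ) := by push_cast; ring
    simp only [add_sub_cancel_right, Real.rpow_natCast] at h2
    rw [h2, e, Real.rpow_natCast, one_div, inv_pow]
    field_simp
  rw [← h3, ← h1]
  refine setIntegral_congr_fun measurableSet_Ioi ?_
  intro t ht
  have ht' : (0:ℝ) < t := ht
  have e2 : t ^ (-1 - 1 : ℝ) = (t⁻¹)^2 := by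
    rw [show (-1 - 1 : ℝ) = -((2:ℕ):ℝ) by norm_num, Real.rpow_neg ht'.le, Real.rpow_natCast, inv_pow]
  simp only [e2, Real.rpow_neg_one, smul_eq_mul, div_eq_mul_inv]
  norm_num
  ring

lemma moment_int (c : ℝ) (hc : 0 < c) (m : ℕ) :
    IntegrableOn (fun t : ℝ => (t⁻¹)^(m+2) * Real.exp (-(c / t))) (Ioi (0:ℝ)) := by
  by_contra h
  have h1 := moment c hc m
  rw [integral_undef h] at h1
  have : 0 < (m.factorial : ℝ) / c^(m+1) := by positivity
  linarith

/-- the kernel -/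
noncomputable def KK (x : ℝ) (N : ℕ) (μ : ℝ) : ℝ :=
  (1 / (Nat.factorial N : ℝ)) * μ⁻¹ * ((N : ℝ) * x / μ) ^ (N + 1) *
                Real.exp (-((N : ℝ) * x / μ))

lemma KK_contDiffOn (x : ℝ) (N : ℕ) : ContDiffOn ℝ (⊤ : ℕ∞) (KK x N) (Ioi 0) := by
  unfold KK
  have hi : ContDiffOn ℝ (⊤ : ℕ∞) (fun μ : ℝ => μ⁻¹) (Ioi 0) :=
    contDiffOn_id.inv (fun t ht => ne_of_gt ht)
  have hd : ContDiffOn ℝ (⊤ : ℕ∞) (fun μ : ℝ => (N : ℝ) * x / μ) (Ioi 0) := by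
    simp only [div_eq_mul_inv]
    exact contDiffOn_const.mul hi
  exact ((contDiffOn_const.mul hi).mul (hd.pow _)).mul hd.neg.exp

lemma KK_nonneg (x : ℝ) (hx : 0 < x) (N : ℕ) (t : ℝ) (ht : 0 < t) : 0 ≤ KK x N t := by
  unfold KK; positivity

lemma KK_moment (x : ℝ) (hx : 0 < x) (m j : ℕ) (hj : 1 ≤ m + j) :
    IntegrableOn (fun t => t^j * KK x (m+j) t) (Ioi 0) ∧
    ∫ t in Ioi (0:ℝ), t^j * KK x (m+j) t
      = (((m+j:ℕ):ℝ) * x)^j * m.factorial / (m+j).factorial := by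
  have hc : 0 < ((m+j:ℕ):ℝ) * x := by
    have : (0:ℝ) < ((m+j:ℕ):ℝ) := by exact_mod_cast hj
    positivity
  set c := ((m+j:ℕ):ℝ) * x with hcdef
  have e : EqOn (fun t => t^j * KK x (m+j) t)
      (fun t => (c^(m+j+1) / (m+j).factorial) * ((t⁻¹)^(m+2) * Real.exp (-(c / t)))) (Ioi 0) := by
    intro t ht
    have ht' : t ≠ 0 := ne_of_gt ht
    simp only [KK, ← hcdef, inv_pow, div_pow]
    field_simp
    ring
  constructor
  · rw [integrableOn_congr_fun e measurableSet_Ioi]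
    exact (moment_int c hc m).const_mul _
  · rw [setIntegral_congr_fun measurableSet_Ioi e, integral_const_mul, moment c hc m]
    field_simp
    ring

lemma KK_bound (x : ℝ) (hx : 0 < x) (ψ : ℝ → ℝ) (L : ℝ) (hψ : Continuous ψ) (hL0 : 0 ≤ L)
    (hψc : HasCompactSupport ψ)
    (hL : ∀ t, |ψ t - ψ x| ≤ L * |t - x|) (M : ℕ) :
    |(∫ t in Ioi (0:ℝ), ψ t * KK x (M+2) t) - ψ x| ≤ L * (1 + x^2) * (Real.sqrt (M+1))⁻¹ := by
  obtain ⟨i0, m0⟩ := KK_moment x hx (M+2) 0 (by omega)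
  obtain ⟨i1, m1⟩ := KK_moment x hx (M+1) 1 (by omega)
  obtain ⟨i2, m2⟩ := KK_moment x hx M 2 (by omega)
  simp only [add_zero, pow_zero, one_mul, add_assoc, Nat.reduceAdd, pow_one] at i0 m0 i1 m1 i2 m2
  have f2 : ((M+2).factorial : ℝ) = (M+2)*((M+1)* (M.factorial : ℝ)) := by
    rw [Nat.factorial_succ, Nat.factorial_succ]; push_cast; ring
  have f1 : ((M+1).factorial : ℝ) = ((M+1)* (M.factorial : ℝ)) := by
    rw [Nat.factorial_succ]; push_cast; ring
  have hfp : (0:ℝ) < (M.factorial : ℝ) := by positivity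
  rw [f2] at m0 m1 m2
  rw [f1] at m1
  push_cast at m0 m1 m2
  have m0' : ∫ t in Ioi (0:ℝ), KK x (M+2) t = 1 := by rw [m0]; field_simp
  have m1' : ∫ t in Ioi (0:ℝ), t * KK x (M+2) t = x := by rw [m1]; field_simp
  have m2' : ∫ t in Ioi (0:ℝ), t^2 * KK x (M+2) t = x^2 * (M+2)/(M+1) := by rw [m2]; field_simp
  set s := Real.sqrt (M+1) with hs
  have hs2 : s^2 = M+1 := Real.sq_sqrt (by positivity)
  have hspos : 0 < s := Real.sqrt_pos.2 (by positivity)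
  have iψ : IntegrableOn (fun t => ψ t * KK x (M+2) t) (Ioi 0) := by
    obtain ⟨C, hC⟩ := hψ.bounded_above_of_compact_support hψc
    exact i0.bdd_mul hψ.aestronglyMeasurable.restrict (Eventually.of_forall hC)
  have iB : IntegrableOn (fun t => L * (s⁻¹ + s * (t - x)^2) * KK x (M+2) t) (Ioi 0) := by
    have := ((i0.const_mul (L*(s⁻¹ + s*x^2))).add (i1.const_mul (-2*L*s*x))).add (i2.const_mul (L*s))
    refine this.congr (Eventually.of_forall fun t => ?_)
    simp only [Pi.add_apply]
    ring
  have vB : ∫ t in Ioi (0:ℝ), L * (s⁻¹ + s * (t - x)^2) * KK x (M+2) t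
      = L * (1 + x^2) * s⁻¹ := by
    have e : ∀ t, L * (s⁻¹ + s * (t - x)^2) * KK x (M+2) t =
      ((L*(s⁻¹ + s*x^2)) * KK x (M+2) t + (-2*L*s*x) * (t * KK x (M+2) t)) +
        (L*s) * (t^2 * KK x (M+2) t) := fun t => by ring
    simp only [e]
    have i01 : IntegrableOn (fun t => (L*(s⁻¹ + s*x^2)) * KK x (M+2) t
        + (-2*L*s*x) * (t * KK x (M+2) t)) (Ioi 0) :=
      (i0.const_mul _).add (i1.const_mul _)
    rw [integral_add i01 (i2.const_mul _),
      integral_add (i0.const_mul _) (i1.const_mul _), integral_const_mul, integral_const_mul,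
      integral_const_mul, m0', m1', m2', ← hs2]
    have : (M:ℝ) + 2 = s^2 + 1 := by linarith
    rw [this]
    field_simp
    ring
  have d : (∫ t in Ioi (0:ℝ), ψ t * KK x (M+2) t) - ψ x
      = ∫ t in Ioi (0:ℝ), (ψ t - ψ x) * KK x (M+2) t := by
    simp only [sub_mul]
    rw [integral_sub iψ (i0.const_mul _), integral_const_mul, m0', mul_one]
  rw [d, ← vB, ← Real.norm_eq_abs]
  refine norm_integral_le_of_norm_le iB ?_
  filter_upwards [ae_restrict_mem measurableSet_Ioi] with t ht
  have hK := KK_nonneg x hx (M+2) t ht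
  rw [norm_mul, Real.norm_eq_abs, Real.norm_eq_abs, abs_of_nonneg hK]
  refine mul_le_mul_of_nonneg_right ((hL t).trans (mul_le_mul_of_nonneg_left ?_ hL0)) hK
  have h1 : s * s⁻¹ = 1 := mul_inv_cancel₀ hspos.ne'
  have hip : 0 < s⁻¹ := inv_pos.2 hspos
  rw [← sq_abs (t - x)]
  set a := |t - x|
  have ha : 0 ≤ a := abs_nonneg _
  have : s⁻¹ + s * a^2 - 2 * a = s⁻¹ * (1 - s * a)^2 := by
    field_simp
    ring
  nlinarith [mul_nonneg hip.le (sq_nonneg (1 - s*a))]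

/-- Let `k ≥ 1` be an integer, `x > 0`, and `φ : ℝ → ℝ` a `C^∞` function with compact
support contained in `(0,∞)`. With
`K_N(λ) := (1/N!) λ⁻¹ (Nx/λ)^{N+1} e^{−Nx/λ}`, one has
`∫_0^∞ φ(λ) (d^k/dλ^k) K_N(λ) dλ → (−1)^k φ^{(k)}(x)` as the integer `N → ∞`. -/
theorem stmt_16 (k : ℕ) (hk : 1 ≤ k) (x : ℝ) (hx : 0 < x)
    (φ : ℝ → ℝ) (hφ : ContDiff ℝ (⊤ : ℕ∞) φ) (hφc : HasCompactSupport φ)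
    (hφs : tsupport φ ⊆ Set.Ioi 0) :
    Tendsto (fun N : ℕ =>
      ∫ lam in Ioi (0 : ℝ),
        φ lam *
          iteratedDeriv k
            (fun μ : ℝ =>
              (1 / (Nat.factorial N : ℝ)) * μ⁻¹ * ((N : ℝ) * x / μ) ^ (N + 1) *
                Real.exp (-((N : ℝ) * x / μ))) lam)
      atTop (nhds ((-1 : ℝ) ^ k * iteratedDeriv k φ x)) := by
  change Tendsto (fun N : ℕ => ∫ lam in Ioi (0 : ℝ), φ lam * iteratedDeriv k (KK x N) lam)
    atTop _
  simp only [fun N => ibp_iter (KK x N) (KK_contDiffOn x N) k φ hφ hφc hφs]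
  refine Tendsto.const_mul _ ?_
  obtain ⟨h1, h2⟩ := iter_compact k φ hφ hφc
  set ψ := iteratedDeriv k φ
  obtain ⟨C, hC⟩ := (h1.of_le (by exact_mod_cast le_top : (1 : WithTop ℕ∞) ≤ (⊤ : ℕ∞))).lipschitzWith_of_hasCompactSupport h2 one_ne_zero
  rw [← tendsto_add_atTop_iff_nat 2, tendsto_iff_norm_sub_tendsto_zero]
  refine squeeze_zero (fun _ => norm_nonneg _) (fun M => KK_bound x hx ψ C h1.continuous C.2 h2
    (fun t => by simpa [Real.dist_eq] using hC.dist_le_mul t x) M) ?_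
  rw [← mul_zero ((C:ℝ) * (1 + x^2))]
  refine Tendsto.const_mul _ (tendsto_inv_atTop_zero.comp (Real.tendsto_sqrt_atTop.comp ?_))
  exact tendsto_atTop_add_const_right _ _ tendsto_natCast_atTop_atTop
end
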